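/- arXiv:math/0006147 — 2 statements merged into one kernel-verified Lean document; each statement's English description precedes it below -/
import Mathlib

section
/- Let U ⊆ ℂ be open and let f : U → ℂ be smooth with nowhere-vanishing Wirtinger derivative ∂f. Set μ = ∂̄f/∂f (the Beltrami coefficient of f). Then the Schwarzian derivative {f,z} satisfies ∂̄{f,z} − μ·∂{f,z} − 2·(∂μ)·{f,z} = ∂³μ on U; that is, ∂̄_μ^{(2)}{f,z} = ∂³μ. -/
/-!
Write `D_k = ∂̄_μ^{(k)}`. Because `∂` and `∂̄` commute, these operators satisfy, besides a graded
Leibniz rule, a commutation rule with `∂`: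
`D_{j+k} (u v) = (D_j u) v + u (D_k v)` and `D_{k+1} ∂u = ∂ (D_k u) + k ∂²μ u`.
The Beltrami equation says `D_0 f = 0`, so `D_1 ∂f = 0` and `D_2 ∂²f = ∂²μ ∂f`. Let `r = ∂²f / ∂f`.
The Leibniz rule for `r ∂f = ∂²f` gives `D_1 r = ∂²μ`, hence `D_2 ∂r = ∂³μ + ∂²μ r` and
`D_2 (r²) = 2 ∂²μ r`. Since `{f,z} = ∂r - r² / 2`, the terms in `∂²μ r` cancel and
`D_2 {f,z} = ∂³μ`.
-/

/-- The Wirtinger derivative ∂u = (u_x − i·u_y)/2 of a function `u : ℂ → ℂ`. -/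
noncomputable def wd (u : ℂ → ℂ) : ℂ → ℂ :=
  fun z => (fderiv ℝ u z 1 - Complex.I * fderiv ℝ u z Complex.I) / 2

/-- The conjugate Wirtinger derivative ∂̄u = (u_x + i·u_y)/2. -/
noncomputable def wdbar (u : ℂ → ℂ) : ℂ → ℂ :=
  fun z => (fderiv ℝ u z 1 + Complex.I * fderiv ℝ u z Complex.I) / 2

/-- The Schwarzian derivative {f,z} = ∂³f/∂f − (3/2)·(∂²f/∂f)² of a smooth map. -/
noncomputable def schwarz (f : ℂ → ℂ) : ℂ → ℂ :=
  fun z => wd (wd (wd f)) z / wd f z - (3/2) * (wd (wd f) z / wd f z)^2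

/-- The operator ∂̄_μ^{(k)} u = ∂̄u − μ·∂u − k·(∂μ)·u. -/
noncomputable def dbarMu (μ : ℂ → ℂ) (k : ℤ) (u : ℂ → ℂ) : ℂ → ℂ :=
  fun z => wdbar u z - μ z * wd u z - (k : ℂ) * wd μ z * u z

open scoped Topology

section

variable {m n : WithTop ℕ∞} {f μ u v : ℂ → ℂ} {j k : ℤ} {z : ℂ}

lemma contDiffAt_div_of_ne_zero {𝕜 𝕜' E : Type*} [NontriviallyNormedField 𝕜] [NormedField 𝕜']
    [NormedAlgebra 𝕜 𝕜'] [NormedAddCommGroup E] [NormedSpace 𝕜 E] {g h : E → 𝕜'} {x : E}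
    (hg : ContDiffAt 𝕜 n g x) (hh : ContDiffAt 𝕜 n h x) (hx : h x ≠ 0) :
    ContDiffAt 𝕜 n (g / h) x := by
  rw [div_eq_mul_inv]
  exact hg.mul (hh.inv hx)

lemma wd_congr (h : u =ᶠ[𝓝 z] v) : wd u z = wd v z := by
  rw [wd, wd, h.fderiv_eq]

lemma wdbar_congr (h : u =ᶠ[𝓝 z] v) : wdbar u z = wdbar v z := by
  rw [wdbar, wdbar, h.fderiv_eq]

lemma contDiffAt_wd (hu : ContDiffAt ℝ n u z) (hmn : m + 1 ≤ n) : ContDiffAt ℝ m (wd u) z := by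
  have hu' : ContDiffAt ℝ m (fderiv ℝ u) z := hu.fderiv_right hmn
  unfold wd
  fun_prop

lemma contDiffAt_wdbar (hu : ContDiffAt ℝ n u z) (hmn : m + 1 ≤ n) :
    ContDiffAt ℝ m (wdbar u) z := by
  have hu' : ContDiffAt ℝ m (fderiv ℝ u) z := hu.fderiv_right hmn
  unfold wdbar
  fun_prop

lemma differentiableAt_wd (hu : ContDiffAt ℝ 2 u z) : DifferentiableAt ℝ (wd u) z :=
  (contDiffAt_wd (m := 1) hu (by norm_num)).differentiableAt one_ne_zero

lemma differentiableAt_wdbar (hu : ContDiffAt ℝ 2 u z) : DifferentiableAt ℝ (wdbar u) z :=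
  (contDiffAt_wdbar (m := 1) hu (by norm_num)).differentiableAt one_ne_zero

lemma wd_zero : wd 0 = 0 := by
  ext
  simp [wd]

lemma wd_sub (hu : DifferentiableAt ℝ u z) (hv : DifferentiableAt ℝ v z) :
    wd (u - v) z = wd u z - wd v z := by
  simp only [wd, fderiv_sub hu hv, sub_apply]
  ring

lemma wdbar_sub (hu : DifferentiableAt ℝ u z) (hv : DifferentiableAt ℝ v z) :
    wdbar (u - v) z = wdbar u z - wdbar v z := by
  simp only [wdbar, fderiv_sub hu hv, sub_apply]
  ring

lemma wd_const_smul (c : ℂ) (hu : DifferentiableAt ℝ u z) : wd (c • u) z = c * wd u z := by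
  simp only [wd, fderiv_const_smul hu, smul_apply, smul_eq_mul]
  ring

lemma wdbar_const_smul (c : ℂ) (hu : DifferentiableAt ℝ u z) :
    wdbar (c • u) z = c * wdbar u z := by
  simp only [wdbar, fderiv_const_smul hu, smul_apply, smul_eq_mul]
  ring

lemma wd_mul (hu : DifferentiableAt ℝ u z) (hv : DifferentiableAt ℝ v z) :
    wd (u * v) z = wd u z * v z + u z * wd v z := by
  simp only [wd, fderiv_mul hu hv, add_apply, smul_apply, smul_eq_mul]
  ring

lemma wdbar_mul (hu : DifferentiableAt ℝ u z) (hv : DifferentiableAt ℝ v z) :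
    wdbar (u * v) z = wdbar u z * v z + u z * wdbar v z := by
  simp only [wdbar, fderiv_mul hu hv, add_apply, smul_apply, smul_eq_mul]
  ring

lemma wdbar_wd_comm (hu : ContDiffAt ℝ 2 u z) : wdbar (wd u) z = wd (wdbar u) z := by
  have hu' : DifferentiableAt ℝ (fderiv ℝ u) z :=
    (hu.fderiv_right (m := 1) (by norm_num)).differentiableAt one_ne_zero
  have hasFDerivAt_apply (w : ℂ) :
      HasFDerivAt (fun y => fderiv ℝ u y w) ((fderiv ℝ (fderiv ℝ u) z).flip w) z := by
    simpa using hu'.hasFDerivAt.clm_apply (hasFDerivAt_const w z)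
  have symm : fderiv ℝ (fderiv ℝ u) z 1 Complex.I = fderiv ℝ (fderiv ℝ u) z Complex.I 1 :=
    (hu.isSymmSndFDerivAt (by simp)).eq 1 Complex.I
  have hwd : HasFDerivAt (wd u) _ z :=
    ((hasFDerivAt_apply 1).sub ((hasFDerivAt_apply Complex.I).const_mul Complex.I)).mul_const
      (2⁻¹ : ℂ)
  have hwdbar : HasFDerivAt (wdbar u) _ z :=
    ((hasFDerivAt_apply 1).add ((hasFDerivAt_apply Complex.I).const_mul Complex.I)).mul_const
      (2⁻¹ : ℂ)
  rw [wdbar, wd, hwd.fderiv, hwdbar.fderiv]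
  simp only [add_apply, sub_apply, smul_apply, smul_eq_mul, ContinuousLinearMap.flip_apply, symm]
  ring

lemma dbarMu_congr (h : u =ᶠ[𝓝 z] v) : dbarMu μ k u z = dbarMu μ k v z := by
  rw [dbarMu, dbarMu, h.eq_of_nhds, wd_congr h, wdbar_congr h]

lemma dbarMu_sub (hu : DifferentiableAt ℝ u z) (hv : DifferentiableAt ℝ v z) :
    dbarMu μ k (u - v) z = dbarMu μ k u z - dbarMu μ k v z := by
  simp only [dbarMu, wd_sub hu hv, wdbar_sub hu hv, Pi.sub_apply]
  ring

lemma dbarMu_const_smul (c : ℂ) (hu : DifferentiableAt ℝ u z) :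
    dbarMu μ k (c • u) z = c * dbarMu μ k u z := by
  simp only [dbarMu, wd_const_smul c hu, wdbar_const_smul c hu, Pi.smul_apply, smul_eq_mul]
  ring

lemma dbarMu_mul (hu : DifferentiableAt ℝ u z) (hv : DifferentiableAt ℝ v z) :
    dbarMu μ (j + k) (u * v) z = dbarMu μ j u z * v z + u z * dbarMu μ k v z := by
  simp only [dbarMu, wd_mul hu hv, wdbar_mul hu hv, Pi.mul_apply, Int.cast_add]
  ring

lemma dbarMu_wd (hμ : ContDiffAt ℝ 2 μ z) (hu : ContDiffAt ℝ 2 u z) :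
    dbarMu μ (k + 1) (wd u) z = wd (dbarMu μ k u) z + k * wd (wd μ) z * u z := by
  have dμ : DifferentiableAt ℝ μ z := hμ.differentiableAt two_ne_zero
  have du : DifferentiableAt ℝ u z := hu.differentiableAt two_ne_zero
  have dwdμ := differentiableAt_wd hμ
  have dwdu := differentiableAt_wd hu
  have dwdbaru := differentiableAt_wdbar hu
  have dbarMu_eq : dbarMu μ k u = wdbar u - μ * wd u - (k : ℂ) • (wd μ * u) := by
    ext w
    simp only [dbarMu, Pi.sub_apply, Pi.mul_apply, Pi.smul_apply, smul_eq_mul, mul_assoc]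
  rw [dbarMu_eq, wd_sub (dwdbaru.sub (dμ.mul dwdu)) ((dwdμ.mul du).const_smul (k : ℂ)),
    wd_sub dwdbaru (dμ.mul dwdu), wd_const_smul _ (dwdμ.mul du), wd_mul dμ dwdu, wd_mul dwdμ du,
    ← wdbar_wd_comm hu, dbarMu]
  push_cast
  ring

/-- The pre-Schwarzian derivative `∂²f / ∂f`, i.e. the logarithmic derivative of `∂f`; it takes the
junk value `0` at zeros of `∂f`. -/
noncomputable def preSchwarz (f : ℂ → ℂ) : ℂ → ℂ := wd (wd f) / wd f

lemma contDiffAt_preSchwarz (hf : ContDiffAt ℝ n f z) (hf' : wd f z ≠ 0) (hmn : m + 2 ≤ n) :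
    ContDiffAt ℝ m (preSchwarz f) z := by
  have hwd : ContDiffAt ℝ (m + 1) (wd f) z :=
    contDiffAt_wd hf (by rwa [add_assoc, one_add_one_eq_two])
  exact contDiffAt_div_of_ne_zero (contDiffAt_wd hwd le_rfl) (hwd.of_le le_self_add) hf'

lemma differentiableAt_preSchwarz (hf : ContDiffAt ℝ 3 f z) (hf' : wd f z ≠ 0) :
    DifferentiableAt ℝ (preSchwarz f) z :=
  (contDiffAt_preSchwarz (m := 1) hf hf' (by norm_num)).differentiableAt one_ne_zero

lemma eventually_wd_ne_zero (hf : ContDiffAt ℝ 1 f z) (hf' : wd f z ≠ 0) :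
    ∀ᶠ w in 𝓝 z, wd f w ≠ 0 :=
  (contDiffAt_wd (m := 0) hf (by norm_num)).continuousAt.eventually_ne hf'

lemma preSchwarz_mul_wd_eventuallyEq (hf : ContDiffAt ℝ 1 f z) (hf' : wd f z ≠ 0) :
    preSchwarz f * wd f =ᶠ[𝓝 z] wd (wd f) := by
  filter_upwards [eventually_wd_ne_zero hf hf'] with w hw
  exact div_mul_cancel₀ _ hw

lemma schwarz_eq_wd_preSchwarz (hf : ContDiffAt ℝ 3 f z) (hf' : wd f z ≠ 0) :
    schwarz f z = (wd (preSchwarz f) - (1 / 2 : ℂ) • (preSchwarz f * preSchwarz f)) z := by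
  have hr := differentiableAt_preSchwarz hf hf'
  have hwd := differentiableAt_wd (hf.of_le (by norm_num))
  have hwd₃ : wd (wd (wd f)) z = wd (preSchwarz f) z * wd f z + preSchwarz f z * wd (wd f) z := by
    rw [← wd_mul hr hwd]
    exact (wd_congr (preSchwarz_mul_wd_eventuallyEq (hf.of_le (by norm_num)) hf')).symm
  simp only [schwarz, hwd₃, Pi.sub_apply, Pi.smul_apply, Pi.mul_apply, smul_eq_mul]
  simp only [preSchwarz, Pi.div_apply]
  field_simp
  ring

lemma dbarMu_one_wd_of_beltrami (hμ : ContDiffAt ℝ 2 μ z) (hf : ContDiffAt ℝ 2 f z)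
    (hfμ : dbarMu μ 0 f =ᶠ[𝓝 z] 0) : dbarMu μ 1 (wd f) z = 0 := by
  have hcomm := dbarMu_wd (k := 0) hμ hf
  rw [wd_congr hfμ, wd_zero] at hcomm
  simpa using hcomm

lemma dbarMu_two_wd_wd_of_beltrami (hμ : ContDiffAt ℝ 2 μ z) (hf : ContDiffAt ℝ 3 f z)
    (hfμ : dbarMu μ 0 f =ᶠ[𝓝 z] 0) :
    dbarMu μ 2 (wd (wd f)) z = wd (wd μ) z * wd f z := by
  have hwd : dbarMu μ 1 (wd f) =ᶠ[𝓝 z] 0 := by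
    filter_upwards [hμ.eventually (by simp), hf.eventually (by simp), hfμ.eventuallyEq_nhds]
      with w hμw hfw hfμw
    exact dbarMu_one_wd_of_beltrami hμw (hfw.of_le (by norm_num)) hfμw
  have hcomm := dbarMu_wd (k := 1) hμ (contDiffAt_wd hf (by norm_num))
  rw [wd_congr hwd, wd_zero] at hcomm
  simpa using hcomm

lemma dbarMu_one_preSchwarz (hμ : ContDiffAt ℝ 2 μ z) (hf : ContDiffAt ℝ 3 f z)
    (hf' : wd f z ≠ 0) (hfμ : dbarMu μ 0 f =ᶠ[𝓝 z] 0) :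
    dbarMu μ 1 (preSchwarz f) z = wd (wd μ) z := by
  have hr := differentiableAt_preSchwarz hf hf'
  have hwd := differentiableAt_wd (hf.of_le (by norm_num))
  have hrf := preSchwarz_mul_wd_eventuallyEq (hf.of_le (by norm_num)) hf'
  apply mul_right_cancel₀ hf'
  calc dbarMu μ 1 (preSchwarz f) z * wd f z
      = dbarMu μ (1 + 1) (preSchwarz f * wd f) z := by
        rw [dbarMu_mul hr hwd, dbarMu_one_wd_of_beltrami hμ (hf.of_le (by norm_num)) hfμ,
          mul_zero, add_zero]
    _ = dbarMu μ 2 (wd (wd f)) z := dbarMu_congr hrf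
    _ = wd (wd μ) z * wd f z := dbarMu_two_wd_wd_of_beltrami hμ hf hfμ

lemma dbarMu_two_wd_preSchwarz (hμ : ContDiffAt ℝ 2 μ z) (hf : ContDiffAt ℝ 4 f z)
    (hf' : wd f z ≠ 0) (hfμ : dbarMu μ 0 f =ᶠ[𝓝 z] 0) :
    dbarMu μ 2 (wd (preSchwarz f)) z = wd (wd (wd μ)) z + wd (wd μ) z * preSchwarz f z := by
  have hr : dbarMu μ 1 (preSchwarz f) =ᶠ[𝓝 z] wd (wd μ) := by
    filter_upwards [hμ.eventually (by simp), hf.eventually (by simp),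
      eventually_wd_ne_zero (hf.of_le (by norm_num)) hf', hfμ.eventuallyEq_nhds]
      with w hμw hfw hfw' hfμw
    exact dbarMu_one_preSchwarz hμw (hfw.of_le (by norm_num)) hfw' hfμw
  have hcomm := dbarMu_wd (k := 1) hμ (contDiffAt_preSchwarz hf hf' (by norm_num))
  rw [wd_congr hr] at hcomm
  simpa using hcomm

lemma dbarMu_two_schwarz (hμ : ContDiffAt ℝ 2 μ z) (hf : ContDiffAt ℝ 4 f z)
    (hf' : wd f z ≠ 0) (hfμ : dbarMu μ 0 f =ᶠ[𝓝 z] 0) :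
    dbarMu μ 2 (schwarz f) z = wd (wd (wd μ)) z := by
  have hf₃ : ContDiffAt ℝ 3 f z := hf.of_le (by norm_num)
  have hS : schwarz f =ᶠ[𝓝 z]
      wd (preSchwarz f) - (1 / 2 : ℂ) • (preSchwarz f * preSchwarz f) := by
    filter_upwards [hf₃.eventually (by simp), eventually_wd_ne_zero (hf.of_le (by norm_num)) hf']
      with w hfw hfw'
    exact schwarz_eq_wd_preSchwarz hfw hfw'
  have hr := differentiableAt_preSchwarz hf₃ hf'
  have hwdr := differentiableAt_wd (contDiffAt_preSchwarz hf hf' (by norm_num))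
  have hsq : dbarMu μ 2 (preSchwarz f * preSchwarz f) z = 2 * wd (wd μ) z * preSchwarz f z := by
    rw [← one_add_one_eq_two, dbarMu_mul hr hr, dbarMu_one_preSchwarz hμ hf₃ hf' hfμ]
    ring
  rw [dbarMu_congr hS, dbarMu_sub hwdr ((hr.mul hr).const_smul (1 / 2 : ℂ)),
    dbarMu_const_smul _ (hr.mul hr), hsq, dbarMu_two_wd_preSchwarz hμ hf hf' hfμ]
  ring

lemma dbarMu_zero_wdbar_div_wd (hf' : wd f z ≠ 0) :
    dbarMu (fun w => wdbar f w / wd f w) 0 f z = 0 := by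
  simp [dbarMu, div_mul_cancel₀ _ hf']

theorem stmt0_general (hf : ContDiffAt ℝ 4 f z) (hf' : wd f z ≠ 0) :
    dbarMu (fun w => wdbar f w / wd f w) 2 (schwarz f) z
      = wd (wd (wd (fun w => wdbar f w / wd f w))) z := by
  have hμ : ContDiffAt ℝ 2 (fun w => wdbar f w / wd f w) z :=
    contDiffAt_div_of_ne_zero (contDiffAt_wdbar (m := 2) hf (by norm_num))
      (contDiffAt_wd (m := 2) hf (by norm_num)) hf'
  have hfμ : dbarMu (fun w => wdbar f w / wd f w) 0 f =ᶠ[𝓝 z] 0 :=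
    (eventually_wd_ne_zero (hf.of_le (by norm_num)) hf').mono fun _ => dbarMu_zero_wdbar_div_wd
  exact dbarMu_two_schwarz hμ hf hf' hfμ

end

/-- for smooth `f` with nowhere-vanishing `∂f` on an open `U`, and
`μ = ∂̄f/∂f`, the Schwarzian derivative satisfies `∂̄_μ^{(2)} {f,z} = ∂³μ` on `U`. -/
theorem stmt0 (U : Set ℂ) (hU : IsOpen U) (f : ℂ → ℂ)
    (hf : ContDiffOn ℝ (⊤ : ℕ∞) f U) (hf' : ∀ z ∈ U, wd f z ≠ 0) :
    ∀ z ∈ U,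
      dbarMu (fun w => wdbar f w / wd f w) 2 (schwarz f) z
        = wd (wd (wd (fun w => wdbar f w / wd f w))) z := by
  intro z hz
  exact stmt0_general (contDiffAt_infty.1 (hf.contDiffAt (hU.mem_nhds hz)) 4) (hf' z hz)
end

section
/- Let U ⊆ ℂ be open, let f : U → ℂ be smooth with nowhere-vanishing Wirtinger derivative ∂f, set μ = ∂̄f/∂f, and let h : U → ℂ be smooth. Then ∂̄_μ^{(2)}({f,z} − h) = D_h μ − ∂̄h on U, i.e. ∂̄({f,z}−h) − μ·∂({f,z}−h) − 2·(∂μ)·({f,z}−h) = ∂³μ + 2h·∂μ + μ·∂h − ∂̄h. -/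
/-!
Write `p = ∂f`, so that `∂̄f = μ p`, and let `N = ∂p / p`, formally `∂ log p`. Since `∂̄p = ∂(μ p)`,
the other logarithmic derivative of `p` is `∂̄p / p = ∂μ + μ N`, and the symmetry of second
derivatives of `log p` gives `∂̄N = ∂(∂μ + μ N)`. The Schwarzian is `S = ∂N - N² / 2`, hence
`∂̄S = ∂(∂̄N) - N ∂̄N = ∂³μ + 2 ∂μ S + μ ∂S`; subtracting `h` from `S` gives the claim.

The only property of `∂` and `∂̄` that enters is that they differentiate along constant complex
vector fields `v + i w`.
-/

open Complex MeasureTheory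

/-- The Schwarzian derivative S(g) = g'''/g' − (3/2)·(g''/g')² of a holomorphic map. -/
noncomputable def schwarzD (g : ℂ → ℂ) : ℂ → ℂ :=
  fun z => deriv (deriv (deriv g)) z / deriv g z - (3/2) * (deriv (deriv g) z / deriv g z)^2

/-- The third-order operator D_h u = ∂³u + 2h·∂u + (∂h)·u. -/
noncomputable def Dop (h u : ℂ → ℂ) : ℂ → ℂ :=
  fun z => wd (wd (wd u)) z + 2 * h z * wd u z + wd h z * u z

/-- The Lie derivative on weight-2 quantities: L_v q = v·∂q + 2·(∂v)·q. -/
noncomputable def lieD (v q : ℂ → ℂ) : ℂ → ℂ :=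
  fun z => v z * wd q z + 2 * wd v z * q z

open scoped Topology ContDiff

/-- The derivative `∂_v u + i ∂_w u` of a complex-valued function `u` along the constant complex
vector field `v + i w`, encoded as the pair `ξ = (v, w)`. The Wirtinger derivatives `∂` and `∂̄` are
the cases `ξ = (1, -i) / 2` and `ξ = (1, i) / 2`. -/
noncomputable def complexDirDeriv {E : Type*} [NormedAddCommGroup E] [NormedSpace ℝ E]
    (ξ : E × E) (u : E → ℂ) : E → ℂ :=
  fun x => fderiv ℝ u x ξ.1 + I * fderiv ℝ u x ξ.2

local notation "∂[" ξ "]" => complexDirDeriv ξ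

section

variable {E : Type*} [NormedAddCommGroup E] [NormedSpace ℝ E]
  {u v f : E → ℂ} {x : E} {m n : ℕ∞ω} (ξ η : E × E)

lemma contDiffAt_complexDirDeriv (hu : ContDiffAt ℝ n u x) (hmn : m + 1 ≤ n) :
    ContDiffAt ℝ m (∂[ξ] u) x := by
  have hu' : ContDiffAt ℝ m (fderiv ℝ u) x := hu.fderiv_right hmn
  exact (hu'.clm_apply contDiffAt_const).add
    (contDiffAt_const.mul (hu'.clm_apply contDiffAt_const))

lemma complexDirDeriv_congr (huv : u =ᶠ[𝓝 x] v) : ∂[ξ] u x = ∂[ξ] v x := by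
  simp only [complexDirDeriv, huv.fderiv_eq]

lemma complexDirDeriv_add (hu : DifferentiableAt ℝ u x) (hv : DifferentiableAt ℝ v x) :
    ∂[ξ] (u + v) x = ∂[ξ] u x + ∂[ξ] v x := by
  simp only [complexDirDeriv, fderiv_add hu hv, add_apply]
  ring

lemma complexDirDeriv_sub (hu : DifferentiableAt ℝ u x) (hv : DifferentiableAt ℝ v x) :
    ∂[ξ] (u - v) x = ∂[ξ] u x - ∂[ξ] v x := by
  simp only [complexDirDeriv, fderiv_sub hu hv, sub_apply]
  ring

lemma complexDirDeriv_const_smul (c : ℂ) (hu : DifferentiableAt ℝ u x) :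
    ∂[ξ] (c • u) x = c * ∂[ξ] u x := by
  simp only [complexDirDeriv, fderiv_const_smul hu, smul_apply, smul_eq_mul]
  ring

lemma complexDirDeriv_mul (hu : DifferentiableAt ℝ u x) (hv : DifferentiableAt ℝ v x) :
    ∂[ξ] (u * v) x = ∂[ξ] u x * v x + u x * ∂[ξ] v x := by
  simp only [complexDirDeriv, fderiv_mul hu hv, add_apply, smul_apply, smul_eq_mul]
  ring

lemma contDiffAt_div (hu : ContDiffAt ℝ n u x) (hv : ContDiffAt ℝ n v x) (hx : v x ≠ 0) :
    ContDiffAt ℝ n (u / v) x := by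
  rw [div_eq_mul_inv]
  exact hu.mul (hv.inv hx)

lemma complexDirDeriv_div (hu : DifferentiableAt ℝ u x) (hv : DifferentiableAt ℝ v x)
    (hx : v x ≠ 0) :
    ∂[ξ] (u / v) x = (∂[ξ] u x * v x - u x * ∂[ξ] v x) / v x ^ 2 := by
  have hdiv : DifferentiableAt ℝ (u / v) x := by
    rw [div_eq_mul_inv]
    exact hu.mul (hv.inv hx)
  have hcancel : u / v * v =ᶠ[𝓝 x] u := by
    filter_upwards [hv.continuousAt.eventually_ne hx] with y hy
    exact div_mul_cancel₀ (u y) hy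
  have hprod := complexDirDeriv_mul ξ hdiv hv
  rw [complexDirDeriv_congr ξ hcancel, Pi.div_apply] at hprod
  rw [hprod]
  field_simp
  ring

lemma fderiv_complexDirDeriv (hu : DifferentiableAt ℝ (fderiv ℝ u) x) (e : E) :
    fderiv ℝ (∂[ξ] u) x e
      = fderiv ℝ (fderiv ℝ u) x e ξ.1 + I * fderiv ℝ (fderiv ℝ u) x e ξ.2 := by
  have hdir (d : E) := hu.hasFDerivAt.clm_apply (hasFDerivAt_const d x)
  have hsum : HasFDerivAt (∂[ξ] u) _ x := (hdir ξ.1).add ((hdir ξ.2).const_mul I)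
  simp [hsum.fderiv]

lemma complexDirDeriv_comm (hu : ContDiffAt ℝ 2 u x) :
    ∂[η] (∂[ξ] u) x = ∂[ξ] (∂[η] u) x := by
  have hu' : DifferentiableAt ℝ (fderiv ℝ u) x :=
    (hu.fderiv_right (m := 1) (by norm_num)).differentiableAt one_ne_zero
  have hsymm : IsSymmSndFDerivAt ℝ u x := hu.isSymmSndFDerivAt (by simp)
  rw [complexDirDeriv, complexDirDeriv]
  simp only [fderiv_complexDirDeriv _ hu', hsymm.eq η.1, hsymm.eq η.2]
  ring

lemma complexDirDeriv_logDeriv_comm (hu : ContDiffAt ℝ 2 u x) (hx : u x ≠ 0) :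
    ∂[η] (∂[ξ] u / u) x = ∂[ξ] (∂[η] u / u) x := by
  have hdu : DifferentiableAt ℝ u x := hu.differentiableAt two_ne_zero
  have hdu' (ζ : E × E) : DifferentiableAt ℝ (∂[ζ] u) x :=
    (contDiffAt_complexDirDeriv (m := 1) ζ hu (by norm_num)).differentiableAt one_ne_zero
  rw [complexDirDeriv_div η (hdu' ξ) hdu hx, complexDirDeriv_div ξ (hdu' η) hdu hx,
    complexDirDeriv_comm ξ η hu]
  ring

/-- The Beltrami coefficient `μ = ∂_η f / ∂_ξ f` of `f`, with `(ξ, η)` in the role of `(∂, ∂̄)`. -/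
noncomputable def beltramiAlong (ξ η : E × E) (f : E → ℂ) : E → ℂ :=
  ∂[η] f / ∂[ξ] f

/-- The pre-Schwarzian derivative `∂_ξ² f / ∂_ξ f` of `f` along `ξ`. -/
noncomputable def preSchwarzianAlong (ξ : E × E) (f : E → ℂ) : E → ℂ :=
  ∂[ξ] (∂[ξ] f) / ∂[ξ] f

/-- The Schwarzian derivative `∂_ξ³ f / ∂_ξ f - (3/2) (∂_ξ² f / ∂_ξ f)²` of `f` along `ξ`. -/
noncomputable def schwarzianAlong (ξ : E × E) (f : E → ℂ) : E → ℂ :=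
  fun x => ∂[ξ] (∂[ξ] (∂[ξ] f)) x / ∂[ξ] f x - 3 / 2 * (∂[ξ] (∂[ξ] f) x / ∂[ξ] f x) ^ 2

lemma contDiffAt_beltramiAlong (hf : ContDiffAt ℝ n f x) (hmn : m + 1 ≤ n)
    (hx : ∂[ξ] f x ≠ 0) : ContDiffAt ℝ m (beltramiAlong ξ η f) x :=
  contDiffAt_div (contDiffAt_complexDirDeriv η hf hmn) (contDiffAt_complexDirDeriv ξ hf hmn) hx

lemma contDiffAt_preSchwarzianAlong (hf : ContDiffAt ℝ n f x) (hmn : m + 2 ≤ n)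
    (hx : ∂[ξ] f x ≠ 0) : ContDiffAt ℝ m (preSchwarzianAlong ξ f) x := by
  have hp : ContDiffAt ℝ (m + 1) (∂[ξ] f) x :=
    contDiffAt_complexDirDeriv ξ hf (by rwa [add_assoc, one_add_one_eq_two])
  exact contDiffAt_div (contDiffAt_complexDirDeriv ξ hp le_rfl) (hp.of_le le_self_add) hx

lemma eventually_complexDirDeriv_ne_zero (hf : ContDiffAt ℝ n f x) (hn : 1 ≤ n)
    (hx : ∂[ξ] f x ≠ 0) : ∀ᶠ y in 𝓝 x, ∂[ξ] f y ≠ 0 :=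
  (contDiffAt_complexDirDeriv (m := 0) ξ hf (by simpa)).continuousAt.eventually_ne hx

lemma schwarzianAlong_eq (hf : ContDiffAt ℝ 3 f x) (hx : ∂[ξ] f x ≠ 0) :
    schwarzianAlong ξ f x
      = ∂[ξ] (preSchwarzianAlong ξ f) x - preSchwarzianAlong ξ f x ^ 2 / 2 := by
  have hp : ContDiffAt ℝ 2 (∂[ξ] f) x := contDiffAt_complexDirDeriv ξ hf (by norm_num)
  have hp' : ContDiffAt ℝ 1 (∂[ξ] (∂[ξ] f)) x := contDiffAt_complexDirDeriv ξ hp (by norm_num)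
  rw [schwarzianAlong, preSchwarzianAlong, complexDirDeriv_div ξ
    (hp'.differentiableAt one_ne_zero) (hp.differentiableAt two_ne_zero) hx, Pi.div_apply]
  field_simp
  ring

lemma schwarzianAlong_eventuallyEq (hf : ContDiffAt ℝ 3 f x) (hx : ∂[ξ] f x ≠ 0) :
    schwarzianAlong ξ f =ᶠ[𝓝 x] ∂[ξ] (preSchwarzianAlong ξ f)
      - (2⁻¹ : ℂ) • (preSchwarzianAlong ξ f * preSchwarzianAlong ξ f) := by
  filter_upwards [hf.eventually (by decide),
    eventually_complexDirDeriv_ne_zero ξ hf (by norm_num) hx] with y hfy hy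
  rw [schwarzianAlong_eq ξ hfy hy]
  simp only [Pi.sub_apply, Pi.smul_apply, Pi.mul_apply, smul_eq_mul]
  ring

lemma logDeriv_complexDirDeriv_eq (hf : ContDiffAt ℝ 2 f x) (hx : ∂[ξ] f x ≠ 0) :
    ∂[η] (∂[ξ] f) x / ∂[ξ] f x = ∂[ξ] (beltramiAlong ξ η f) x
      + beltramiAlong ξ η f x * preSchwarzianAlong ξ f x := by
  have hp : ContDiffAt ℝ 1 (∂[ξ] f) x := contDiffAt_complexDirDeriv ξ hf (by norm_num)
  have hμ : ContDiffAt ℝ 1 (beltramiAlong ξ η f) x :=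
    contDiffAt_beltramiAlong ξ η hf (by norm_num) hx
  have hbeltrami : ∂[η] f =ᶠ[𝓝 x] beltramiAlong ξ η f * ∂[ξ] f := by
    filter_upwards [eventually_complexDirDeriv_ne_zero ξ hf (by norm_num) hx] with y hy
    exact (div_mul_cancel₀ (∂[η] f y) hy).symm
  rw [complexDirDeriv_comm ξ η hf, complexDirDeriv_congr ξ hbeltrami, complexDirDeriv_mul ξ
    (hμ.differentiableAt one_ne_zero) (hp.differentiableAt one_ne_zero), preSchwarzianAlong,
    Pi.div_apply]
  field_simp

lemma complexDirDeriv_preSchwarzianAlong (hf : ContDiffAt ℝ 3 f x) (hx : ∂[ξ] f x ≠ 0) :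
    ∂[η] (preSchwarzianAlong ξ f) x
      = ∂[ξ] (∂[ξ] (beltramiAlong ξ η f)) x
        + (∂[ξ] (beltramiAlong ξ η f) x * preSchwarzianAlong ξ f x
          + beltramiAlong ξ η f x * ∂[ξ] (preSchwarzianAlong ξ f) x) := by
  have hf₂ : ContDiffAt ℝ 2 f x := hf.of_le (by norm_num)
  have hp : ContDiffAt ℝ 2 (∂[ξ] f) x := contDiffAt_complexDirDeriv ξ hf (by norm_num)
  have hN : DifferentiableAt ℝ (preSchwarzianAlong ξ f) x :=
    (contDiffAt_preSchwarzianAlong (m := 1) ξ hf (by norm_num) hx).differentiableAt one_ne_zero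
  have hμ : ContDiffAt ℝ 2 (beltramiAlong ξ η f) x :=
    contDiffAt_beltramiAlong ξ η hf (by norm_num) hx
  have hμ' : DifferentiableAt ℝ (∂[ξ] (beltramiAlong ξ η f)) x :=
    (contDiffAt_complexDirDeriv (m := 1) ξ hμ (by norm_num)).differentiableAt one_ne_zero
  have hμ₀ : DifferentiableAt ℝ (beltramiAlong ξ η f) x := hμ.differentiableAt two_ne_zero
  have hlog : ∂[η] (∂[ξ] f) / ∂[ξ] f =ᶠ[𝓝 x]
      ∂[ξ] (beltramiAlong ξ η f) + beltramiAlong ξ η f * preSchwarzianAlong ξ f := by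
    filter_upwards [hf₂.eventually (by decide),
      eventually_complexDirDeriv_ne_zero ξ hf (by norm_num) hx] with y hfy hy
    exact logDeriv_complexDirDeriv_eq ξ η hfy hy
  calc ∂[η] (preSchwarzianAlong ξ f) x
    _ = ∂[ξ] (∂[η] (∂[ξ] f) / ∂[ξ] f) x := complexDirDeriv_logDeriv_comm ξ η hp hx
    _ = ∂[ξ] (∂[ξ] (beltramiAlong ξ η f) + beltramiAlong ξ η f * preSchwarzianAlong ξ f) x :=
      complexDirDeriv_congr ξ hlog
    _ = _ := by rw [complexDirDeriv_add ξ hμ' (hμ₀.mul hN), complexDirDeriv_mul ξ hμ₀ hN]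

lemma contDiffAt_schwarzianAlong (hf : ContDiffAt ℝ n f x) (hmn : m + 3 ≤ n)
    (hx : ∂[ξ] f x ≠ 0) : ContDiffAt ℝ m (schwarzianAlong ξ f) x := by
  have hN : ContDiffAt ℝ (m + 1) (preSchwarzianAlong ξ f) x :=
    contDiffAt_preSchwarzianAlong ξ hf (by rwa [add_assoc, add_comm 1, two_add_one_eq_three]) hx
  have hN₀ : ContDiffAt ℝ m (preSchwarzianAlong ξ f) x := hN.of_le le_self_add
  exact ((contDiffAt_complexDirDeriv ξ hN le_rfl).sub
    ((hN₀.mul hN₀).const_smul (2⁻¹ : ℂ))).congr_of_eventuallyEq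
      (schwarzianAlong_eventuallyEq ξ (hf.of_le (le_add_self.trans hmn)) hx)

lemma complexDirDeriv_schwarzianAlong_eq_preSchwarzianAlong (hf : ContDiffAt ℝ 4 f x)
    (hx : ∂[ξ] f x ≠ 0) :
    ∂[η] (schwarzianAlong ξ f) x = ∂[η] (∂[ξ] (preSchwarzianAlong ξ f)) x
      - preSchwarzianAlong ξ f x * ∂[η] (preSchwarzianAlong ξ f) x := by
  have hN : ContDiffAt ℝ 2 (preSchwarzianAlong ξ f) x :=
    contDiffAt_preSchwarzianAlong ξ hf (by norm_num) hx
  have hN₀ : DifferentiableAt ℝ (preSchwarzianAlong ξ f) x := hN.differentiableAt two_ne_zero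
  have hN' : DifferentiableAt ℝ (∂[ξ] (preSchwarzianAlong ξ f)) x :=
    (contDiffAt_complexDirDeriv (m := 1) ξ hN (by norm_num)).differentiableAt one_ne_zero
  rw [complexDirDeriv_congr η (schwarzianAlong_eventuallyEq ξ (hf.of_le (by norm_num)) hx),
    complexDirDeriv_sub η hN' ((hN₀.mul hN₀).const_smul _),
    complexDirDeriv_const_smul η _ (hN₀.mul hN₀), complexDirDeriv_mul η hN₀ hN₀]
  ring

lemma complexDirDeriv_complexDirDeriv_preSchwarzianAlong (hf : ContDiffAt ℝ 4 f x)
    (hx : ∂[ξ] f x ≠ 0) :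
    ∂[η] (∂[ξ] (preSchwarzianAlong ξ f)) x
      = ∂[ξ] (∂[ξ] (∂[ξ] (beltramiAlong ξ η f))) x
        + ∂[ξ] (∂[ξ] (beltramiAlong ξ η f)) x * preSchwarzianAlong ξ f x
        + 2 * ∂[ξ] (beltramiAlong ξ η f) x * ∂[ξ] (preSchwarzianAlong ξ f) x
        + beltramiAlong ξ η f x * ∂[ξ] (∂[ξ] (preSchwarzianAlong ξ f)) x := by
  have hf₃ : ContDiffAt ℝ 3 f x := hf.of_le (by norm_num)
  set N := preSchwarzianAlong ξ f
  set μ := beltramiAlong ξ η f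
  have hN : ContDiffAt ℝ 2 N x := contDiffAt_preSchwarzianAlong ξ hf (by norm_num) hx
  have hN' : ContDiffAt ℝ 1 (∂[ξ] N) x := contDiffAt_complexDirDeriv ξ hN (by norm_num)
  have hμ : ContDiffAt ℝ 3 μ x := contDiffAt_beltramiAlong ξ η hf (by norm_num) hx
  have hμ' : ContDiffAt ℝ 2 (∂[ξ] μ) x := contDiffAt_complexDirDeriv ξ hμ (by norm_num)
  have hμ'' : ContDiffAt ℝ 1 (∂[ξ] (∂[ξ] μ)) x :=
    contDiffAt_complexDirDeriv ξ hμ' (by norm_num)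
  have dN := hN.differentiableAt two_ne_zero
  have dN' := hN'.differentiableAt one_ne_zero
  have dμ := hμ.differentiableAt three_ne_zero
  have dμ' := hμ'.differentiableAt two_ne_zero
  have dμ'' := hμ''.differentiableAt one_ne_zero
  have hηN : ∂[η] N =ᶠ[𝓝 x] ∂[ξ] (∂[ξ] μ) + (∂[ξ] μ * N + μ * ∂[ξ] N) := by
    filter_upwards [hf₃.eventually (by decide),
      eventually_complexDirDeriv_ne_zero ξ hf (by norm_num) hx] with y hfy hy
    exact complexDirDeriv_preSchwarzianAlong ξ η hfy hy
  rw [complexDirDeriv_comm ξ η hN, complexDirDeriv_congr ξ hηN,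
    complexDirDeriv_add ξ dμ'' ((dμ'.mul dN).add (dμ.mul dN')),
    complexDirDeriv_add ξ (dμ'.mul dN) (dμ.mul dN'),
    complexDirDeriv_mul ξ dμ' dN, complexDirDeriv_mul ξ dμ dN']
  ring

theorem complexDirDeriv_schwarzianAlong (hf : ContDiffAt ℝ 4 f x) (hx : ∂[ξ] f x ≠ 0) :
    ∂[η] (schwarzianAlong ξ f) x
      = ∂[ξ] (∂[ξ] (∂[ξ] (beltramiAlong ξ η f))) x
        + 2 * ∂[ξ] (beltramiAlong ξ η f) x * schwarzianAlong ξ f x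
        + beltramiAlong ξ η f x * ∂[ξ] (schwarzianAlong ξ f) x := by
  have hf₃ : ContDiffAt ℝ 3 f x := hf.of_le (by norm_num)
  rw [complexDirDeriv_schwarzianAlong_eq_preSchwarzianAlong ξ η hf hx,
    complexDirDeriv_schwarzianAlong_eq_preSchwarzianAlong ξ ξ hf hx,
    complexDirDeriv_complexDirDeriv_preSchwarzianAlong ξ η hf hx,
    complexDirDeriv_preSchwarzianAlong ξ η hf₃ hx, schwarzianAlong_eq ξ hf₃ hx]
  ring

end

lemma wd_eq_complexDirDeriv : wd = ∂[(2⁻¹ : ℝ) • ((1 : ℂ), -I)] := by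
  funext u z
  simp only [wd, complexDirDeriv, Prod.smul_fst, Prod.smul_snd, map_smul, map_neg]
  simp only [real_smul, ofReal_inv, ofReal_ofNat]
  ring

lemma wdbar_eq_complexDirDeriv : wdbar = ∂[(2⁻¹ : ℝ) • ((1 : ℂ), I)] := by
  funext u z
  simp only [wdbar, complexDirDeriv, Prod.smul_fst, Prod.smul_snd, map_smul]
  simp only [real_smul, ofReal_inv, ofReal_ofNat]
  ring

lemma schwarz_eq_schwarzianAlong :
    schwarz = schwarzianAlong ((2⁻¹ : ℝ) • ((1 : ℂ), -I)) := by
  funext f z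
  simp only [schwarz, schwarzianAlong, wd_eq_complexDirDeriv]

theorem stmt1_general {f h : ℂ → ℂ} {z : ℂ} (hf : ContDiffAt ℝ 4 f z) (hf' : wd f z ≠ 0)
    (hh : DifferentiableAt ℝ h z) :
    dbarMu (wdbar f / wd f) 2 (schwarz f - h) z = Dop h (wdbar f / wd f) z - wdbar h z := by
  simp only [dbarMu, Dop, schwarz_eq_schwarzianAlong, wd_eq_complexDirDeriv,
    wdbar_eq_complexDirDeriv, Pi.sub_apply] at hf' ⊢
  have hS : DifferentiableAt ℝ (schwarzianAlong ((2⁻¹ : ℝ) • ((1 : ℂ), -I)) f) z :=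
    (contDiffAt_schwarzianAlong (m := 1) _ hf (by norm_num) hf').differentiableAt one_ne_zero
  rw [complexDirDeriv_sub _ hS hh, complexDirDeriv_sub _ hS hh,
    complexDirDeriv_schwarzianAlong _ _ hf hf', beltramiAlong]
  push_cast
  ring

/-- `∂̄_μ^{(2)}({f,z} − h) = D_h μ − ∂̄h` on `U`, where `μ = ∂̄f/∂f`. -/
theorem stmt1 (U : Set ℂ) (hU : IsOpen U) (f h : ℂ → ℂ)
    (hf : ContDiffOn ℝ (⊤ : ℕ∞) f U) (hf' : ∀ z ∈ U, wd f z ≠ 0)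
    (hh : ContDiffOn ℝ (⊤ : ℕ∞) h U) :
    ∀ z ∈ U,
      dbarMu (fun w => wdbar f w / wd f w) 2 (fun w => schwarz f w - h w) z
        = Dop h (fun w => wdbar f w / wd f w) z - wdbar h z := by
  intro z hz
  have hUz : U ∈ 𝓝 z := hU.mem_nhds hz
  exact stmt1_general ((hf.contDiffAt hUz).of_le (WithTop.coe_le_coe.2 le_top)) (hf' z hz)
    ((hh.contDiffAt hUz).differentiableAt (by simp))
end
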